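/- Under Assumptions 1 and 2, let L > 0 be such that c is 1/(4L)-cocoercive on P. Then in the CumLog dynamics with finite initial valuation s^0 ∈ ℝ^K, for every p* ∈ P* and every t ≥ 0, D(p*, p^{t+1}) ≤ D(p*, p^t) − ((1 − 2 r η^t L)/2) · ‖p^t − p^{t+1}‖₂². -/

import Mathlib

open Finset Filter Topology

/-!
Both logit vectors have logarithm `-r s` up to a term that is constant on each OD pair, and such
terms are annihilated by differences of strategies. The three-point identity for the relative
entropy therefore turns a step of the dynamics into
`D(p*, p') = D(p*, p) - D(p', p) + r η ⟨c p, p* - p'⟩`.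
Strong convexity of `x ↦ x log x` on `[0, 1]` gives `D(p', p) ≥ ‖p - p'‖² / 2`. For the last term,
cocoercivity and the variational inequality at `p*` leave only `⟨c p - c p*, p - p'⟩` minus
`‖c p - c p*‖² / (4L)`, which is at most `L ‖p - p'‖²` by Young's inequality.
-/

section StrongConvexity

lemma add_mul_sub_le_of_convexOn {S : Set ℝ} {f : ℝ → ℝ} {f' x y : ℝ} (hf : ConvexOn ℝ S f)
    (hx : x ∈ S) (hy : y ∈ S) (hf' : HasDerivAt f f' y) : f y + f' * (x - y) ≤ f x := by
  rcases lt_trichotomy x y with hxy | rfl | hxy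
  · have hslope := hf.slope_le_of_hasDerivAt hx hy hxy hf'
    rw [slope_def_field, div_le_iff₀ (sub_pos.2 hxy)] at hslope
    linarith
  · simp
  · have hslope := hf.le_slope_of_hasDerivAt hy hx hxy hf'
    rw [slope_def_field, le_div_iff₀ (sub_pos.2 hxy)] at hslope
    linarith

lemma add_mul_sub_add_sq_le_of_strongConvexOn {S : Set ℝ} {m : ℝ} {f : ℝ → ℝ} {f' x y : ℝ}
    (hf : StrongConvexOn S m f) (hx : x ∈ S) (hy : y ∈ S) (hf' : HasDerivAt f f' y) :
    f y + f' * (x - y) + m / 2 * (x - y) ^ 2 ≤ f x := by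
  have hconvex : ConvexOn ℝ S fun z ↦ f z - m / 2 * z ^ 2 := by
    simpa only [Real.norm_eq_abs, sq_abs] using strongConvexOn_iff_convex.1 hf
  have hderiv : HasDerivAt (fun z ↦ f z - m / 2 * z ^ 2) (f' - m * y) y :=
    (hf'.sub ((hasDerivAt_pow 2 y).const_mul (m / 2))).congr_deriv (by ring)
  linear_combination add_mul_sub_le_of_convexOn hconvex hx hy hderiv

lemma strongConvexOn_mul_log (b : ℝ) :
    StrongConvexOn (Set.Icc 0 b) b⁻¹ fun x ↦ x * Real.log x := by
  simp only [strongConvexOn_iff_convex, Real.norm_eq_abs, sq_abs]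
  refine convexOn_of_hasDerivWithinAt2_nonneg (f' := fun x ↦ Real.log x + 1 - b⁻¹ * x)
    (f'' := fun x ↦ x⁻¹ - b⁻¹) (convex_Icc 0 b) ?_ ?_ ?_ ?_
  · exact (Real.continuous_mul_log.sub (by fun_prop)).continuousOn
  all_goals
    intro x hx
    rw [interior_Icc] at hx
  · exact ((Real.hasDerivAt_mul_log hx.1.ne').sub
      ((hasDerivAt_pow 2 x).const_mul (b⁻¹ / 2))).congr_deriv (by ring) |>.hasDerivWithinAt
  · exact (((Real.hasDerivAt_log hx.1.ne').add_const 1).sub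
      ((hasDerivAt_id x).const_mul b⁻¹)).congr_deriv (by ring) |>.hasDerivWithinAt
  · exact sub_nonneg.2 (inv_anti₀ hx.1 hx.2.le)

lemma sq_sub_le_mul_log_sub_log {b x y : ℝ} (hx : x ∈ Set.Icc 0 b) (hy : y ∈ Set.Ioc 0 b) :
    b⁻¹ / 2 * (x - y) ^ 2 ≤ x * (Real.log x - Real.log y) - (x - y) := by
  have htangent := add_mul_sub_add_sq_le_of_strongConvexOn
    (strongConvexOn_mul_log b) hx (Set.Ioc_subset_Icc_self hy) (Real.hasDerivAt_mul_log hy.1.ne')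
  linear_combination htangent

end StrongConvexity

section RelativeEntropy

variable {K : Type*} [Fintype K]

/-- The Kullback–Leibler divergence `D(p, q)` of two vectors. The convention `0 · log 0 = 0` is
automatic since `Real.log` is total; the values are meaningful for `p` nonnegative and `q`
positive. -/
noncomputable def relEntropy (p q : K → ℝ) : ℝ :=
  ∑ k, p k * (Real.log (p k) - Real.log (q k))

lemma relEntropy_eq_sub_add (x y z : K → ℝ) :
    relEntropy x z = relEntropy x y - relEntropy z y +
      ∑ k, (x k - z k) * (Real.log (y k) - Real.log (z k)) := by
  simp only [relEntropy, ← sum_sub_distrib, ← sum_add_distrib]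
  exact sum_congr rfl fun k _ ↦ by ring

lemma sum_sq_sub_le_relEntropy {b : ℝ} {p q : K → ℝ} (hp : ∀ k, p k ∈ Set.Icc 0 b)
    (hq : ∀ k, q k ∈ Set.Ioc 0 b) (hpq : ∑ k, p k = ∑ k, q k) :
    b⁻¹ / 2 * ∑ k, (p k - q k) ^ 2 ≤ relEntropy p q := by
  calc b⁻¹ / 2 * ∑ k, (p k - q k) ^ 2
      ≤ ∑ k, (p k * (Real.log (p k) - Real.log (q k)) - (p k - q k)) := by
        rw [mul_sum]
        exact sum_le_sum fun k _ ↦ sq_sub_le_mul_log_sub_log (hp k) (hq k)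
    _ = relEntropy p q := by
        rw [sum_sub_distrib, sum_sub_distrib, hpq, sub_self, sub_zero, relEntropy]

end RelativeEntropy

section Cocoercivity

variable {K : Type*} [Fintype K]

/-- `μ`-cocoercivity on `P` of a map between coordinate spaces, for the Euclidean inner product and
norm, written as sums because `K → ℝ` carries the sup norm. -/
def CocoerciveOn (μ : ℝ) (P : Set (K → ℝ)) (c : (K → ℝ) → K → ℝ) : Prop :=
  ∀ a ∈ P, ∀ b ∈ P, μ * ∑ k, (c b k - c a k) ^ 2 ≤ ∑ k, (c b k - c a k) * (b k - a k)

/-- The solutions of the Stampacchia variational inequality `⟨c x, y - x⟩ ≥ 0` for all `y ∈ P`;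
for route costs these are the Wardrop equilibria, the set `P*` of the theorem. -/
def variationalSolutions (P : Set (K → ℝ)) (c : (K → ℝ) → K → ℝ) : Set (K → ℝ) :=
  {x ∈ P | ∀ y ∈ P, 0 ≤ ∑ k, c x k * (y k - x k)}

lemma sum_mul_le_sum_sq_add_sum_sq {L : ℝ} (hL : 0 < L) (v w : K → ℝ) :
    ∑ k, v k * w k ≤ 1 / (4 * L) * ∑ k, v k ^ 2 + L * ∑ k, w k ^ 2 := by
  rw [mul_sum, mul_sum, ← sum_add_distrib]
  refine sum_le_sum fun k _ ↦ sub_nonneg.1 ?_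
  calc (0 : ℝ) ≤ L * (v k / (2 * L) - w k) ^ 2 := by positivity
    _ = 1 / (4 * L) * v k ^ 2 + L * w k ^ 2 - v k * w k := by field_simp; ring

lemma sum_mul_sub_le_of_cocoerciveOn {L : ℝ} (hL : 0 < L) {P : Set (K → ℝ)}
    {c : (K → ℝ) → K → ℝ} (hc : CocoerciveOn (1 / (4 * L)) P c) {x y z : K → ℝ}
    (hx : x ∈ variationalSolutions P c) (hy : y ∈ P) (hz : z ∈ P) :
    ∑ k, c y k * (x k - z k) ≤ L * ∑ k, (y k - z k) ^ 2 := by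
  have hcocoercive := hc x hx.1 y hy
  have hequilibrium := hx.2 z hz
  have hyoung := sum_mul_le_sum_sq_add_sum_sq hL (fun k ↦ c y k - c x k) (fun k ↦ y k - z k)
  have hsplit : ∑ k, c y k * (x k - z k) = ∑ k, (c y k - c x k) * (y k - z k) -
      ∑ k, (c y k - c x k) * (y k - x k) - ∑ k, c x k * (z k - x k) := by
    simp only [← sum_sub_distrib]
    exact sum_congr rfl fun k _ ↦ by ring
  linarith

end Cocoercivity

section Logit

variable {W K : Type*} [Fintype K] [DecidableEq W] {ω : K → W}

/-- The strategy set `P` of the routing game: nonnegative vectors with total mass one on the routes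
of each OD pair. -/
def routeStrategies (ω : K → W) : Set (K → ℝ) :=
  {p | (∀ k, 0 ≤ p k) ∧ ∀ w, ∑ k with ω k = w, p k = 1}

/-- The partition function of the logit choice: the total weight `exp (-r s)` of the routes of the
OD pair `w`. -/
noncomputable def logitPartition (ω : K → W) (r : ℝ) (s : K → ℝ) (w : W) : ℝ :=
  ∑ k with ω k = w, Real.exp (-r * s k)

/-- The logit choice `q_r(s)` on each OD pair, with the valuations `s` read as costs. -/
noncomputable def logitChoice (ω : K → W) (r : ℝ) (s : K → ℝ) (k : K) : ℝ :=
  Real.exp (-r * s k) / logitPartition ω r s (ω k)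

lemma le_one_of_mem_routeStrategies {p : K → ℝ} (hp : p ∈ routeStrategies ω) (k : K) :
    p k ≤ 1 := by
  rw [← hp.2 (ω k)]
  exact single_le_sum (fun i _ ↦ hp.1 i) (mem_filter.2 ⟨mem_univ k, rfl⟩)

lemma sum_mul_comp_of_mem_routeStrategies {p : K → ℝ} (hp : p ∈ routeStrategies ω)
    (g : W → ℝ) : ∑ k, p k * g (ω k) = ∑ w ∈ univ.image ω, g w := by
  rw [← sum_fiberwise_of_maps_to fun k hk ↦ mem_image_of_mem ω hk]
  refine sum_congr rfl fun w _ ↦ ?_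
  calc ∑ k with ω k = w, p k * g (ω k) = ∑ k with ω k = w, p k * g w :=
        sum_congr rfl fun k hk ↦ by rw [(mem_filter.1 hk).2]
    _ = g w := by rw [← sum_mul, hp.2 w, one_mul]

lemma logitPartition_pos (r : ℝ) (s : K → ℝ) (k : K) : 0 < logitPartition ω r s (ω k) :=
  sum_pos (fun _ _ ↦ Real.exp_pos _) ⟨k, mem_filter.2 ⟨mem_univ k, rfl⟩⟩

lemma logitChoice_pos (r : ℝ) (s : K → ℝ) (k : K) : 0 < logitChoice ω r s k :=
  div_pos (Real.exp_pos _) (logitPartition_pos r s k)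

lemma logitChoice_mem_routeStrategies (hω : Function.Surjective ω) (r : ℝ) (s : K → ℝ) :
    logitChoice ω r s ∈ routeStrategies ω := by
  refine ⟨fun k ↦ (logitChoice_pos r s k).le, hω.forall.2 fun k₀ ↦ ?_⟩
  calc ∑ k with ω k = ω k₀, logitChoice ω r s k
      = ∑ k with ω k = ω k₀, Real.exp (-r * s k) / logitPartition ω r s (ω k₀) :=
        sum_congr rfl fun k hk ↦ by rw [logitChoice, (mem_filter.1 hk).2]
    _ = logitPartition ω r s (ω k₀) / logitPartition ω r s (ω k₀) := (sum_div ..).symm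
    _ = 1 := div_self (logitPartition_pos r s k₀).ne'

lemma log_logitChoice (r : ℝ) (s : K → ℝ) (k : K) :
    Real.log (logitChoice ω r s k) = -r * s k - Real.log (logitPartition ω r s (ω k)) := by
  rw [logitChoice, Real.log_div (Real.exp_pos _).ne' (logitPartition_pos r s k).ne', Real.log_exp]

lemma half_sum_sq_sub_le_relEntropy {p q : K → ℝ} (hp : p ∈ routeStrategies ω)
    (hq : q ∈ routeStrategies ω) (hq_pos : ∀ k, 0 < q k) :
    1 / 2 * ∑ k, (p k - q k) ^ 2 ≤ relEntropy p q := by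
  have hmass : ∑ k, p k = ∑ k, q k := by
    simpa only [mul_one] using (sum_mul_comp_of_mem_routeStrategies hp fun _ ↦ 1).trans
      (sum_mul_comp_of_mem_routeStrategies hq fun _ ↦ 1).symm
  simpa only [inv_one] using sum_sq_sub_le_relEntropy
    (fun k ↦ ⟨hp.1 k, le_one_of_mem_routeStrategies hp k⟩)
    (fun k ↦ ⟨hq_pos k, le_one_of_mem_routeStrategies hq k⟩) hmass

lemma sum_sub_mul_log_logitChoice_sub {x z : K → ℝ} (hx : x ∈ routeStrategies ω)
    (hz : z ∈ routeStrategies ω) (r : ℝ) (s s' : K → ℝ) :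
    ∑ k, (x k - z k) * (Real.log (logitChoice ω r s k) - Real.log (logitChoice ω r s' k)) =
      r * ∑ k, (s' k - s k) * (x k - z k) := by
  let g (w : W) : ℝ :=
    Real.log (logitPartition ω r s' w) - Real.log (logitPartition ω r s w)
  have hlog (k : K) : Real.log (logitChoice ω r s k) - Real.log (logitChoice ω r s' k) =
      r * (s' k - s k) + g (ω k) := by
    simp only [log_logitChoice, g]
    ring
  have hg : ∑ k, x k * g (ω k) - ∑ k, z k * g (ω k) = 0 := by
    rw [sum_mul_comp_of_mem_routeStrategies hx, sum_mul_comp_of_mem_routeStrategies hz, sub_self]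
  rw [← sub_eq_zero, ← hg, mul_sum, ← sum_sub_distrib, ← sum_sub_distrib]
  exact sum_congr rfl fun k _ ↦ by rw [hlog]; ring

lemma relEntropy_logitChoice_add (hω : Function.Surjective ω) {x : K → ℝ}
    (hx : x ∈ routeStrategies ω) (r η : ℝ) (s v : K → ℝ) :
    relEntropy x (logitChoice ω r fun k ↦ s k + η * v k) =
      relEntropy x (logitChoice ω r s) -
        relEntropy (logitChoice ω r fun k ↦ s k + η * v k) (logitChoice ω r s) +
      r * η * ∑ k, v k * (x k - logitChoice ω r (fun k ↦ s k + η * v k) k) := by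
  rw [relEntropy_eq_sub_add x (logitChoice ω r s), sum_sub_mul_log_logitChoice_sub hx
    (logitChoice_mem_routeStrategies hω r _)]
  simp only [add_sub_cancel_left, mul_assoc, ← mul_sum]

end Logit

theorem stmt_6_general {W K : Type*} [Fintype K] [DecidableEq W] {ω : K → W}
    (hω : Function.Surjective ω) {c : (K → ℝ) → K → ℝ} {L : ℝ} (hL : 0 < L)
    (hc : CocoerciveOn (1 / (4 * L)) (routeStrategies ω) c) {r : ℝ} (hr : 0 ≤ r)
    {η : ℕ → ℝ} (hη : ∀ t, 0 ≤ η t) {s p : ℕ → K → ℝ} (hp : ∀ t, p t = logitChoice ω r (s t))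
    (hs : ∀ t, s (t + 1) = fun k ↦ s t k + η t * c (p t) k) :
    ∀ pstar ∈ variationalSolutions (routeStrategies ω) c, ∀ t : ℕ,
      relEntropy pstar (p (t + 1)) ≤ relEntropy pstar (p t) -
        (1 - 2 * r * η t * L) / 2 * ∑ k, (p t k - p (t + 1) k) ^ 2 := by
  intro pstar hpstar t
  have hmem (n : ℕ) : p n ∈ routeStrategies ω := hp n ▸ logitChoice_mem_routeStrategies hω r (s n)
  have hpos (k : K) : 0 < p t k := hp t ▸ logitChoice_pos r (s t) k
  have hstep : relEntropy pstar (p (t + 1)) = relEntropy pstar (p t) -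
      relEntropy (p (t + 1)) (p t) + r * η t * ∑ k, c (p t) k * (pstar k - p (t + 1) k) := by
    rw [hp (t + 1), hs t, relEntropy_logitChoice_add hω hpstar.1, ← hp t]
  have hentropy : 1 / 2 * ∑ k, (p t k - p (t + 1) k) ^ 2 ≤ relEntropy (p (t + 1)) (p t) := by
    simpa only [sub_sq_comm] using half_sum_sq_sub_le_relEntropy (hmem (t + 1)) (hmem t) hpos
  have hcost := mul_le_mul_of_nonneg_left
    (sum_mul_sub_le_of_cocoerciveOn hL hc hpstar (hmem t) (hmem (t + 1))) (mul_nonneg hr (hη t))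
  linear_combination hstep + hentropy + hcost

theorem stmt_6
    {W K E : Type*} [Fintype W] [Fintype K] [Fintype E]
    [DecidableEq W] [DecidableEq E]
    [Nonempty W] [Nonempty K]
    (ω : K → W) (hω : Function.Surjective ω)
    (Λ : E → K → ℝ) (hΛ : ∀ e k, Λ e k = 0 ∨ Λ e k = 1)
    (d : W → ℝ) (hd : ∀ w, 0 < d w)
    (u : (E → ℝ) → (E → ℝ))
    (P : Set (K → ℝ))
    (hP : P = {p : K → ℝ | (∀ k, 0 ≤ p k) ∧
      ∀ w, ∑ k ∈ Finset.univ.filter (fun k => ω k = w), p k = 1})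
    (Λbar : E → K → ℝ) (hΛbar : ∀ e k, Λbar e k = d (ω k) * Λ e k)
    (c : (K → ℝ) → K → ℝ)
    (hc : ∀ p k, c p k = ∑ e, Λ e k * u (fun e' => ∑ k', Λbar e' k' * p k') e)
    (X : Set (E → ℝ)) (hX : X = (fun p e => ∑ k, Λbar e k * p k) '' P)
    (hu1 : ∃ U : Set (E → ℝ), IsOpen U ∧ X ⊆ U ∧ ContDiffOn ℝ 2 u U)
    (hu2 : ∀ x ∈ X,
      (∀ v : E → ℝ, 0 ≤ ∑ i, ∑ j, v i * (fderiv ℝ u x (Pi.single j (1 : ℝ)) i) * v j) ∧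
      (∀ v : E → ℝ, 0 ≤ ∑ i, ∑ j,
        v i * (∑ m, fderiv ℝ u x (Pi.single m (1 : ℝ)) i *
          fderiv ℝ u x (Pi.single j (1 : ℝ)) m) * v j))
    (L : ℝ) (hL : 0 < L)
    (hcoco : ∀ a ∈ P, ∀ b ∈ P,
      (1 / (4 * L)) * ∑ k, (c b k - c a k) ^ 2 ≤ ∑ k, (c b k - c a k) * (b k - a k))
    (q : ℝ → (K → ℝ) → K → ℝ)
    (hq : ∀ (rr : ℝ) (ss : K → ℝ) (k : K),
      q rr ss k = Real.exp (-rr * ss k) /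
        ∑ k' ∈ Finset.univ.filter (fun k' => ω k' = ω k), Real.exp (-rr * ss k'))
    (Pstar : Set (K → ℝ))
    (hPstar : Pstar = {ps ∈ P | ∀ pp ∈ P, 0 ≤ ∑ k, c ps k * (pp k - ps k)})
    (D : (K → ℝ) → (K → ℝ) → ℝ)
    (hD : ∀ a b, D a b = ∑ k, a k * (Real.log (a k) - Real.log (b k)))
    (r : ℝ) (hr : 0 < r)
    (η : ℕ → ℝ) (hη : ∀ t, 0 < η t)
    (s : ℕ → K → ℝ) (p : ℕ → K → ℝ)
    (hp : ∀ t, p t = q r (s t))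
    (hs : ∀ t, s (t + 1) = fun k => s t k + η t * c (p t) k)
 :
    ∀ pstar ∈ Pstar, ∀ t : ℕ,
      D pstar (p (t + 1)) ≤ D pstar (p t)
        - ((1 - 2 * r * η t * L) / 2) * ∑ k, (p t k - p (t + 1) k) ^ 2 := by
  obtain rfl : D = relEntropy := funext₂ hD
  obtain rfl : q = logitChoice ω := funext₃ hq
  subst hP hPstar
  exact stmt_6_general hω hL hcoco hr.le (fun t ↦ (hη t).le) hp hs
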